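/- There exists a constant C > 0 depending only on n such that, for every abstract Monge–Ampère pairing setup (W, B, 𝟙, F) as in the context, every choice of reference element φ_ref ∈ F, and all φ, ψ ∈ F: max{|I(φ) − I(ψ)|, |J(φ) − J(ψ)|} ≤ C · I(φ, ψ)^{1/2ⁿ} · (max{J(φ), J(ψ)})^{1 − 1/2ⁿ}. -/

import Mathlib

open Finset

/-- Abstract Monge–Ampère pairing setup with `n = m + 1`: a symmetric multilinear
form `B` on `W^(n+1) = W^(m+2)`, a unit element `one`, and a nonempty convex set
`F ⊆ W`, satisfying (i) normalization `B(𝟙, φ₁, …, φₙ) = 1`, (ii) integration by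
parts `B(u, 𝟙, g₂, …, gₙ) = 0` for `u ∈ W₀` and `gᵢ ∈ W' = span (F ∪ {𝟙})`, and
(iii) the Cauchy–Schwarz / local Hodge index inequality
`B(u, u, φ₁, …, φ_{n-1}) ≤ 0` for `u ∈ W₀`. -/
structure MASetup (m : ℕ) (W : Type*) [AddCommGroup W] [Module ℝ W] where
  B : MultilinearMap ℝ (fun _ : Fin (m + 2) => W) ℝ
  symm : ∀ (v : Fin (m + 2) → W) (σ : Equiv.Perm (Fin (m + 2))), B (v ∘ σ) = B v
  one : W
  F : Set W
  Fne : F.Nonempty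
  Fconv : Convex ℝ F
  unital : ∀ g : Fin (m + 1) → W, (∀ i, g i ∈ F) → B (Fin.cons one g) = 1
  parts : ∀ u ∈ Submodule.span ℝ ({x | ∃ φ ∈ F, ∃ ψ ∈ F, x = φ - ψ} ∪ {one}),
      ∀ g : Fin m → W, (∀ i, g i ∈ Submodule.span ℝ (F ∪ {one})) →
        B (Fin.cons u (Fin.cons one g)) = 0
  hodge : ∀ u ∈ Submodule.span ℝ ({x | ∃ φ ∈ F, ∃ ψ ∈ F, x = φ - ψ} ∪ {one}),
      ∀ g : Fin m → W, (∀ i, g i ∈ F) → B (Fin.cons u (Fin.cons u g)) ≤ 0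

namespace MASetup

variable {m : ℕ} {W : Type*} [AddCommGroup W] [Module ℝ W]

/-- The vector with `j` copies of `φ` followed by copies of `ψ`. -/
def mixVec (φ ψ : W) (j : ℕ) {k : ℕ} : Fin k → W := fun i => if (i : ℕ) < j then φ else ψ

/-- The linear span `W₀` of the differences of elements of `F` together with `one`. -/
def W0 (S : MASetup m W) : Submodule ℝ W :=
  Submodule.span ℝ ({x | ∃ φ ∈ S.F, ∃ ψ ∈ S.F, x = φ - ψ} ∪ {S.one})

/-- The Monge–Ampère energy
`E(φ, ψ) = (n+1)⁻¹ ∑_{j=0}^{n} B(φ-ψ, φ, …, φ, ψ, …, ψ)` with `j` copies of `φ`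
and `n - j` copies of `ψ` among the last `n` arguments. -/
noncomputable def energy (S : MASetup m W) (φ ψ : W) : ℝ :=
  ((m : ℝ) + 2)⁻¹ * ∑ j ∈ Finset.range (m + 2), S.B (Fin.cons (φ - ψ) (mixVec φ ψ j))

/-- The functional `I(φ, ψ) = B(φ-ψ, ψ, …, ψ) - B(φ-ψ, φ, …, φ)`. -/
noncomputable def Ifun (S : MASetup m W) (φ ψ : W) : ℝ :=
  S.B (Fin.cons (φ - ψ) fun _ => ψ) - S.B (Fin.cons (φ - ψ) fun _ => φ)

/-- The functional `J_ψ(φ) = B(φ-ψ, ψ, …, ψ) - E(φ, ψ)`. -/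
noncomputable def Jfun (S : MASetup m W) (ψ φ : W) : ℝ :=
  S.B (Fin.cons (φ - ψ) fun _ => ψ) - S.energy φ ψ

end MASetup

namespace MASetup

set_option linter.unusedSectionVars false

variable {m : ℕ} {W : Type*} [AddCommGroup W] [Module ℝ W]

/-! ### Generalities on multilinear maps -/

/-- Domination: a multilinear form which is nonnegative on `F` increases up to a factor. -/
lemma ml_dom {k : ℕ} (f : MultilinearMap ℝ (fun _ : Fin k => W) ℝ) (F : Set W)
    (hf : ∀ g : Fin k → W, (∀ i, g i ∈ F) → 0 ≤ f g) (t : ℝ) (ht : 0 ≤ t) (ht1 : t ≤ 1)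
    (g h y : Fin k → W) (hg : ∀ i, g i ∈ F) (hh : ∀ i, h i ∈ F) (hy : ∀ i, y i ∈ F)
    (hgh : ∀ i, h i = t • g i + (1 - t) • y i) :
    t ^ k * f g ≤ f h := by
  classical
  have key : ∀ s : Finset (Fin k), t ^ s.card * f g ≤ f (s.piecewise h g) := by
    intro s
    induction s using Finset.induction_on with
    | empty => simp
    | insert i s hi ih =>
      have hp : ∀ j, s.piecewise h g j ∈ F := by
        intro j
        by_cases hj : j ∈ s
        · simpa [hj] using hh j
        · simpa [hj] using hg j
      have h1 : Function.update (s.piecewise h g) i (g i) = s.piecewise h g := by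
        rw [Function.update_eq_self_iff]
        simp [hi]
      have h2 : 0 ≤ f (Function.update (s.piecewise h g) i (y i)) := by
        apply hf
        intro j
        by_cases hj : j = i
        · subst hj
          simpa using hy j
        · simpa [hj] using hp j
      rw [Finset.piecewise_insert, hgh i, f.map_update_add, f.map_update_smul,
        f.map_update_smul, h1, Finset.card_insert_of_notMem hi, pow_succ]
      simp only [smul_eq_mul]
      have h3 : 0 ≤ (1 - t) * f (Function.update (s.piecewise h g) i (y i)) :=
        mul_nonneg (by linarith) h2
      have h4 := mul_le_mul_of_nonneg_left ih ht
      linarith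
  have := key Finset.univ
  simpa using this

/-- Telescoping bound. -/
lemma ml_tele {k : ℕ} (f : MultilinearMap ℝ (fun _ : Fin k => W) ℝ) (L : Set W) (K : ℝ)
    (hf : ∀ (p : Fin k → W) (i : Fin k), (∀ j, p j ∈ L) → ∀ x ∈ L, ∀ y ∈ L,
      |f (Function.update p i (x - y))| ≤ K)
    (g h : Fin k → W) (hg : ∀ i, g i ∈ L) (hh : ∀ i, h i ∈ L) :
    |f h - f g| ≤ k * K := by
  classical
  have key : ∀ s : Finset (Fin k), |f (s.piecewise h g) - f g| ≤ s.card * K := by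
    intro s
    induction s using Finset.induction_on with
    | empty => simp
    | insert i s hi ih =>
      have hp : ∀ j, s.piecewise h g j ∈ L := by
        intro j
        by_cases hj : j ∈ s
        · simpa [hj] using hh j
        · simpa [hj] using hg j
      have h1 : Function.update (s.piecewise h g) i (g i) = s.piecewise h g := by
        rw [Function.update_eq_self_iff]
        simp [hi]
      have h2 := hf _ i hp (h i) (hh i) (g i) (hg i)
      rw [f.map_update_sub, h1] at h2
      rw [Finset.piecewise_insert, Finset.card_insert_of_notMem hi]
      push_cast
      rw [abs_le] at *
      constructor <;> linarith [h2.1, h2.2, ih.1, ih.2]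
  have := key Finset.univ
  simpa using this

/-! ### Symmetry -/

lemma B_update (S : MASetup m W) (p : Fin (m + 2) → W) (i : Fin (m + 2)) (v : W) :
    S.B (Function.update p i v) = S.B (Fin.cons v (i.removeNth p)) := by
  rw [← Fin.insertNth_removeNth, ← Fin.cons_comp_cycleRange, S.symm]

lemma B_tail_symm (S : MASetup m W) (u : W) (p : Fin (m + 1) → W)
    (σ : Equiv.Perm (Fin (m + 1))) :
    S.B (Fin.cons u (p ∘ σ)) = S.B (Fin.cons u p) := by
  rw [← S.symm (Fin.cons u p) (Equiv.Perm.decomposeFin.symm (0, σ))]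
  congr 1
  funext j
  refine Fin.cases ?_ (fun j => ?_) j <;> simp

lemma B_cons_update (S : MASetup m W) (u : W) (p : Fin (m + 1) → W) (i : Fin (m + 1)) (v : W) :
    S.B (Fin.cons u (Function.update p i v)) = S.B (Fin.cons u (Fin.cons v (i.removeNth p))) := by
  rw [← Fin.insertNth_removeNth, ← Fin.cons_comp_cycleRange, S.B_tail_symm]

lemma B_swap_tail (S : MASetup m W) (x y w : W) (g : Fin m → W) (i : Fin m) :
    S.B (Fin.cons x (Fin.cons y (Function.update g i w))) =
      S.B (Fin.cons x (Fin.cons w (Function.update g i y))) := by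
  rw [← S.B_tail_symm x (Fin.cons w (Function.update g i y)) (Equiv.swap 0 i.succ)]
  congr 2
  funext j
  refine Fin.cases ?_ (fun j => ?_) j
  · simp
  · by_cases hj : j = i
    · subst hj
      rw [Function.comp_apply, Equiv.swap_apply_right, Fin.cons_succ, Fin.cons_zero]
      simp
    · rw [Function.comp_apply, Equiv.swap_apply_of_ne_of_ne (Fin.succ_ne_zero j)
        (by simpa using hj)]
      simp [hj]

lemma B_swap (S : MASetup m W) (x y : W) (g : Fin m → W) :
    S.B (Fin.cons x (Fin.cons y g)) = S.B (Fin.cons y (Fin.cons x g)) := by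
  rw [← S.symm (Fin.cons y (Fin.cons x g)) (Equiv.swap 0 1)]
  congr 1
  funext j
  refine Fin.cases ?_ (fun j => ?_) j
  · simp
  · refine Fin.cases ?_ (fun j => ?_) j
    · simp
    · rw [Function.comp_apply, Equiv.swap_apply_of_ne_of_ne (Fin.succ_ne_zero _)
        (by simp [Fin.ext_iff])]
      simp

/-! ### The semidefinite forms -/

/-- The form `⟨x, y⟩_g = -B(x, y, g)`. -/
noncomputable def ip (S : MASetup m W) (g : Fin m → W) (x y : W) : ℝ :=
  - S.B (Fin.cons x (Fin.cons y g))

lemma ip_symm (S : MASetup m W) (g : Fin m → W) (x y : W) : S.ip g x y = S.ip g y x := by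
  simp only [ip, S.B_swap x y]

lemma ip_add_left (S : MASetup m W) (g : Fin m → W) (x y z : W) :
    S.ip g (x + y) z = S.ip g x z + S.ip g y z := by
  simp only [ip]
  rw [S.B.cons_add]; ring

lemma ip_smul_left (S : MASetup m W) (g : Fin m → W) (c : ℝ) (x z : W) :
    S.ip g (c • x) z = c * S.ip g x z := by
  simp only [ip]
  rw [S.B.cons_smul, smul_eq_mul]; ring

lemma ip_add_right (S : MASetup m W) (g : Fin m → W) (x y z : W) :
    S.ip g z (x + y) = S.ip g z x + S.ip g z y := by
  rw [ip_symm, ip_add_left, ip_symm, S.ip_symm g y]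

lemma ip_smul_right (S : MASetup m W) (g : Fin m → W) (c : ℝ) (x z : W) :
    S.ip g z (c • x) = c * S.ip g z x := by
  rw [ip_symm, ip_smul_left, ip_symm]

/-- `g ↦ ⟨x, y⟩_g` as a multilinear map. -/
noncomputable def ipM (S : MASetup m W) (x y : W) : MultilinearMap ℝ (fun _ : Fin m => W) ℝ :=
  - (S.B.curryLeft x).curryLeft y

lemma ipM_apply (S : MASetup m W) (x y : W) (g : Fin m → W) : S.ipM x y g = S.ip g x y := rfl

lemma ip_nonneg (S : MASetup m W) (g : Fin m → W) (hg : ∀ i, g i ∈ S.F) (x : W)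
    (hx : x ∈ S.W0) : 0 ≤ S.ip g x x := by
  have := S.hodge x hx g hg
  simp only [ip]; linarith

lemma ip_cs (S : MASetup m W) (g : Fin m → W) (hg : ∀ i, g i ∈ S.F) (x y : W)
    (hx : x ∈ S.W0) (hy : y ∈ S.W0) : S.ip g x y ^ 2 ≤ S.ip g x x * S.ip g y y := by
  have h : ∀ t : ℝ, 0 ≤ S.ip g y y * (t * t) + (2 * S.ip g x y) * t + S.ip g x x := by
    intro t
    have h1 := S.ip_nonneg g hg (x + t • y) (S.W0.add_mem hx (S.W0.smul_mem t hy))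
    rw [ip_add_left, ip_add_right, ip_add_right, ip_smul_left, ip_smul_left, ip_smul_right,
      ip_smul_right, S.ip_symm g y x] at h1
    linarith
  have := discrim_le_zero h
  rw [discrim] at this
  nlinarith

lemma ip_comb (S : MASetup m W) (g : Fin m → W) (hg : ∀ i, g i ∈ S.F) (x y : W)
    (hx : x ∈ S.W0) (hy : y ∈ S.W0) (s t : ℝ) :
    S.ip g (s • x + t • y) (s • x + t • y) ≤
      2 * s ^ 2 * S.ip g x x + 2 * t ^ 2 * S.ip g y y := by
  have h1 := S.ip_nonneg g hg (s • x + (-t) • y)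
    (S.W0.add_mem (S.W0.smul_mem _ hx) (S.W0.smul_mem _ hy))
  rw [ip_add_left, ip_add_right, ip_add_right, ip_smul_left, ip_smul_left, ip_smul_left,
    ip_smul_left, ip_smul_right, ip_smul_right, ip_smul_right,
      ip_smul_right, S.ip_symm g y x] at *
  nlinarith

lemma sub_mem_W0 (S : MASetup m W) {x y : W} (hx : x ∈ S.F) (hy : y ∈ S.F) : x - y ∈ S.W0 :=
  Submodule.subset_span (Or.inl ⟨x, hx, y, hy, rfl⟩)

/-- Domination for the squared seminorms. -/
lemma ip_dom (S : MASetup m W) (u : W) (hu : u ∈ S.W0) (t : ℝ) (ht : 0 ≤ t) (ht1 : t ≤ 1)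
    (g h : Fin m → W) (hg : ∀ i, g i ∈ S.F) (hh : ∀ i, h i ∈ S.F)
    (hgh : ∀ i, ∃ y ∈ S.F, h i = t • g i + (1 - t) • y) :
    t ^ m * S.ip g u u ≤ S.ip h u u := by
  choose y hy hy' using hgh
  exact ml_dom (S.ipM u u) S.F (fun g hg => S.ip_nonneg g hg u hu) t ht ht1 g h y hg hh hy hy'

/-! ### The functionals -/

lemma mixVec_zero (φ ψ : W) {k : ℕ} : (mixVec φ ψ 0 : Fin k → W) = fun _ => ψ := by
  funext i; simp [mixVec]

lemma mixVec_top (φ ψ : W) {k j : ℕ} (h : k ≤ j) : (mixVec φ ψ j : Fin k → W) = fun _ => φ := by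
  funext i
  have := i.2
  simp only [mixVec]
  rw [if_pos (by omega)]

lemma mixVec_mem (F : Set W) {φ ψ : W} (hφ : φ ∈ F) (hψ : ψ ∈ F) (j : ℕ) {k : ℕ} (i : Fin k) :
    mixVec φ ψ j i ∈ F := by
  simp only [mixVec]; split_ifs <;> assumption

lemma mixVec_self (φ ψ : W) {k : ℕ} (i : Fin k) :
    Function.update (mixVec φ ψ i : Fin k → W) i ψ = mixVec φ ψ i := by
  rw [Function.update_eq_self_iff]; simp [mixVec]

lemma mixVec_succ (φ ψ : W) {k : ℕ} (i : Fin k) :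
    Function.update (mixVec φ ψ i : Fin k → W) i φ = mixVec φ ψ (i + 1) := by
  funext j
  by_cases hj : j = i
  · subst hj; simp [mixVec]
  · have : (j : ℕ) ≠ i := fun h => hj (Fin.ext h)
    simp only [Function.update_of_ne hj, mixVec]
    congr 1
    apply propext; omega

lemma mixVec_remove (φ ψ : W) {k : ℕ} (i : Fin (k + 1)) :
    i.removeNth (mixVec φ ψ i : Fin (k + 1) → W) = mixVec φ ψ i := by
  funext j
  simp only [Fin.removeNth, mixVec]
  congr 1
  apply propext
  simp only [Fin.succAbove, Fin.lt_def]
  split_ifs with h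
  · simp
  · simp at h ⊢; omega

lemma B_diff_step (S : MASetup m W) (φ ψ : W) (j : ℕ) (hj : j < m + 2) :
    S.B (mixVec φ ψ (j + 1)) - S.B (mixVec φ ψ j) =
      S.B (Fin.cons (φ - ψ) (mixVec φ ψ j)) := by
  have h := S.B_update (mixVec φ ψ j) ⟨j, hj⟩ (φ - ψ)
  rw [S.B.map_update_sub] at h
  have h1 := mixVec_succ φ ψ (⟨j, hj⟩ : Fin (m + 2))
  have h2 := mixVec_self φ ψ (⟨j, hj⟩ : Fin (m + 2))
  have h3 := mixVec_remove φ ψ (⟨j, hj⟩ : Fin (m + 2))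
  simp only at h1 h2 h3
  rw [h1, h2, h3] at h
  exact h

lemma B_diff_step' (S : MASetup m W) (u φ ψ : W) (j : ℕ) (hj : j < m + 1) :
    S.B (Fin.cons u (mixVec φ ψ j)) - S.B (Fin.cons u (mixVec φ ψ (j + 1))) =
      S.ip (mixVec φ ψ j) u (φ - ψ) := by
  have h := S.B_cons_update u (mixVec φ ψ j) ⟨j, hj⟩ (φ - ψ)
  have h0 := (S.B.curryLeft u).map_update_sub (mixVec φ ψ j) ⟨j, hj⟩ φ ψ
  have h1 := mixVec_succ φ ψ (⟨j, hj⟩ : Fin (m + 1))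
  have h2 := mixVec_self φ ψ (⟨j, hj⟩ : Fin (m + 1))
  have h3 := mixVec_remove φ ψ (⟨j, hj⟩ : Fin (m + 1))
  simp only at h1 h2 h3
  rw [h1, h2] at h0
  rw [h3] at h
  simp only [MultilinearMap.curryLeft_apply] at h0
  rw [h] at h0
  rw [ip, h0]; ring

/-- Diagonal values. -/
noncomputable def G (S : MASetup m W) (φ : W) : ℝ := S.B fun _ => φ

lemma energy_eq (S : MASetup m W) (φ ψ : W) :
    S.energy φ ψ = ((m : ℝ) + 2)⁻¹ * (S.G φ - S.G ψ) := by
  rw [energy]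
  congr 1
  rw [Finset.sum_congr rfl (fun j hj => (S.B_diff_step φ ψ j (Finset.mem_range.1 hj)).symm),
    Finset.sum_range_sub (fun j => S.B (mixVec φ ψ j)), mixVec_zero, mixVec_top _ _ le_rfl]
  rfl

lemma d_anti (S : MASetup m W) {φ ψ : W} (hφ : φ ∈ S.F) (hψ : ψ ∈ S.F) (j : ℕ) (hj : j < m + 1) :
    S.B (Fin.cons (φ - ψ) (mixVec φ ψ (j + 1))) ≤ S.B (Fin.cons (φ - ψ) (mixVec φ ψ j)) := by
  have h := S.B_diff_step' (φ - ψ) φ ψ j hj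
  have := S.ip_nonneg (mixVec φ ψ j) (mixVec_mem _ hφ hψ j) _ (S.sub_mem_W0 hφ hψ)
  linarith

lemma d_le_zero (S : MASetup m W) {φ ψ : W} (hφ : φ ∈ S.F) (hψ : ψ ∈ S.F) (j : ℕ)
    (hj : j ≤ m + 1) :
    S.B (Fin.cons (φ - ψ) (mixVec φ ψ j)) ≤ S.B (Fin.cons (φ - ψ) fun _ => ψ) := by
  induction j with
  | zero => rw [mixVec_zero]
  | succ j ih => exact (S.d_anti hφ hψ j (by omega)).trans (ih (by omega))

lemma d_ge_top (S : MASetup m W) {φ ψ : W} (hφ : φ ∈ S.F) (hψ : ψ ∈ S.F) (j : ℕ)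
    (hj : j ≤ m + 1) :
    S.B (Fin.cons (φ - ψ) fun _ => φ) ≤ S.B (Fin.cons (φ - ψ) (mixVec φ ψ j)) := by
  induction hj using Nat.decreasingInduction with
  | self => rw [mixVec_top _ _ le_rfl]
  | of_succ k hk ih => exact ih.trans (S.d_anti hφ hψ k hk)

lemma J_eq (S : MASetup m W) (φ ψ : W) :
    ((m : ℝ) + 2) * S.Jfun ψ φ = ∑ j ∈ Finset.range (m + 2),
      (S.B (Fin.cons (φ - ψ) fun _ => ψ) - S.B (Fin.cons (φ - ψ) (mixVec φ ψ j))) := by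
  have : (m : ℝ) + 2 ≠ 0 := by positivity
  rw [Jfun, energy, Finset.sum_sub_distrib, Finset.sum_const, Finset.card_range]
  field_simp
  simp

lemma J_nonneg (S : MASetup m W) {φ ψ : W} (hφ : φ ∈ S.F) (hψ : ψ ∈ S.F) : 0 ≤ S.Jfun ψ φ := by
  have h := S.J_eq φ ψ
  have h2 : 0 ≤ ((m : ℝ) + 2) * S.Jfun ψ φ := by
    rw [h]
    apply Finset.sum_nonneg
    intro j hj
    have := S.d_le_zero hφ hψ j (by have := Finset.mem_range.1 hj; omega)
    linarith
  have : (0 : ℝ) < (m : ℝ) + 2 := by positivity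
  exact nonneg_of_mul_nonneg_right h2 this

lemma I_le_J (S : MASetup m W) {φ ψ : W} (hφ : φ ∈ S.F) (hψ : ψ ∈ S.F) :
    S.Ifun φ ψ ≤ ((m : ℝ) + 2) * S.Jfun ψ φ := by
  rw [J_eq]
  have h := Finset.single_le_sum (s := Finset.range (m + 2)) (f := fun j =>
      (S.B (Fin.cons (φ - ψ) fun _ => ψ) - S.B (Fin.cons (φ - ψ) (mixVec φ ψ j))))
      (fun j hj => by
        have := S.d_le_zero hφ hψ j (by have := Finset.mem_range.1 hj; omega)
        linarith) (Finset.mem_range.2 (Nat.lt_succ_self (m + 1)))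
  rw [mixVec_top _ _ (Nat.le_refl _)] at h
  exact h

lemma J_le_I (S : MASetup m W) {φ ψ : W} (hφ : φ ∈ S.F) (hψ : ψ ∈ S.F) :
    S.Jfun ψ φ ≤ S.Ifun φ ψ := by
  have h := S.J_eq φ ψ
  have h2 : ((m : ℝ) + 2) * S.Jfun ψ φ ≤ ((m : ℝ) + 2) * S.Ifun φ ψ := by
    rw [h]
    refine (Finset.sum_le_card_nsmul _ _ (S.Ifun φ ψ) ?_).trans ?_
    · intro j hj
      have := S.d_ge_top hφ hψ j (by have := Finset.mem_range.1 hj; omega)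
      rw [Ifun]; linarith
    · simp
  exact le_of_mul_le_mul_left h2 (by positivity)

lemma I_nonneg (S : MASetup m W) {φ ψ : W} (hφ : φ ∈ S.F) (hψ : ψ ∈ S.F) : 0 ≤ S.Ifun φ ψ :=
  (S.J_nonneg hφ hψ).trans (S.J_le_I hφ hψ)

lemma ip_le_I (S : MASetup m W) {φ ψ : W} (hφ : φ ∈ S.F) (hψ : ψ ∈ S.F) :
    S.ip (fun _ => φ) (φ - ψ) (φ - ψ) ≤ S.Ifun φ ψ := by
  have h := S.B_diff_step' (φ - ψ) φ ψ m (Nat.lt_succ_self m)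
  rw [mixVec_top _ _ (le_refl (m + 1))] at h
  rw [show (mixVec φ ψ m : Fin m → W) = fun _ => φ from mixVec_top _ _ le_rfl] at h
  have h2 := S.d_le_zero hφ hψ m (by omega)
  rw [Ifun]; linarith

/-- Convexity of `J`. -/
lemma J_convex (S : MASetup m W) {φ ψ r χ : W} (hφ : φ ∈ S.F) (hψ : ψ ∈ S.F) (hr : r ∈ S.F)
    (hχ : χ ∈ S.F) (a b : ℝ) (ha : 0 ≤ a) (hb : 0 ≤ b) (hab : a + b ≤ 1)
    (h : χ = a • φ + b • ψ + (1 - a - b) • r) :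
    S.Jfun r χ ≤ a * S.Jfun r φ + b * S.Jfun r ψ := by
  have h1 := S.J_nonneg hφ hχ
  have h2 := S.J_nonneg hψ hχ
  have h3 := S.J_nonneg hr hχ
  have e1 : a * S.B (Fin.cons (φ - χ) fun _ => χ) + b * S.B (Fin.cons (ψ - χ) fun _ => χ) +
      (1 - a - b) * S.B (Fin.cons (r - χ) fun _ => χ) = 0 := by
    have : a • (φ - χ) + b • (ψ - χ) + (1 - a - b) • (r - χ) = 0 := by
      rw [h]; module
    have h0 := congrArg (fun x => S.B.curryLeft x (fun _ => χ)) this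
    simpa [-map_sub] using h0
  have e2 : S.B (Fin.cons (χ - r) fun _ => r) =
      a * S.B (Fin.cons (φ - r) fun _ => r) + b * S.B (Fin.cons (ψ - r) fun _ => r) := by
    have : χ - r = a • (φ - r) + b • (ψ - r) := by
      rw [h]; module
    have h0 := congrArg (fun x => S.B.curryLeft x (fun _ => r)) this
    simpa [-map_sub] using h0
  simp only [Jfun, energy_eq] at *
  rw [e2]
  have h1' := mul_le_mul_of_nonneg_left h1 ha
  have h2' := mul_le_mul_of_nonneg_left h2 hb
  have h3' := mul_le_mul_of_nonneg_left h3 (show 0 ≤ 1 - a - b by linarith)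
  linarith

/-- Seminorm bound from a bound on `J`. -/
lemma ip_le_of_J (S : MASetup m W) {ω χ r : W} (hω : ω ∈ S.F) (hχ : χ ∈ S.F) (hr : r ∈ S.F)
    (M : ℝ) (hM : S.Jfun r ω ≤ M) (hd : ∃ y ∈ S.F, ω = (1 / 2 : ℝ) • χ + (1 - 1 / 2 : ℝ) • y) :
    S.ip (fun _ => χ) (ω - r) (ω - r) ≤ 2 ^ m * (((m : ℝ) + 2) * M) := by
  have h1 := S.ip_dom (ω - r) (S.sub_mem_W0 hω hr) (1 / 2) (by norm_num) (by norm_num)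
    (fun _ => χ) (fun _ => ω) (fun _ => hχ) (fun _ => hω) (fun _ => hd)
  have h2 := S.ip_le_I hω hr
  have h3 := S.I_le_J hω hr
  have h4 : ((m : ℝ) + 2) * S.Jfun r ω ≤ ((m : ℝ) + 2) * M :=
    mul_le_mul_of_nonneg_left hM (by positivity)
  have h5 := mul_le_mul_of_nonneg_left ((h1.trans h2).trans (h3.trans h4))
    (show (0 : ℝ) ≤ 2 ^ m by positivity)
  rw [← mul_assoc, ← mul_pow] at h5
  norm_num at h5
  exact h5

/-! ### Exponents -/

lemma hq_sq (I M : ℝ) (hI : 0 ≤ I) (hM : 0 ≤ M) (p : ℕ) :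
    (I ^ ((1 : ℝ) / 2 ^ (p + 1)) * M ^ (1 - (1 : ℝ) / 2 ^ (p + 1))) ^ 2 =
      I ^ ((1 : ℝ) / 2 ^ p) * M ^ (1 - (1 : ℝ) / 2 ^ p) * M := by
  have h2 : (1 : ℝ) / 2 ^ p ≤ 1 := by
    rw [div_le_one (by positivity)]
    exact one_le_pow₀ (by norm_num)
  have hs : (1 : ℝ) / 2 ^ (p + 1) * 2 = 1 / 2 ^ p := by
    rw [pow_succ]; field_simp
  have hM1 : M ^ (1 - (1 : ℝ) / 2 ^ p) * M =
      M ^ (1 - (1 : ℝ) / 2 ^ p) * M ^ (1 : ℝ) := by rw [Real.rpow_one]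
  have hpw : ∀ x : ℝ, x ^ 2 = x ^ (2 : ℝ) := fun x => (Real.rpow_two x).symm
  rw [mul_pow, hpw, hpw (M ^ _), ← Real.rpow_mul hI, ← Real.rpow_mul hM,
    mul_assoc, hM1, ← Real.rpow_add_of_nonneg hM (by linarith) (by norm_num)]
  rw [hs]
  congr 2
  linarith

lemma chain (N : ℕ) (b : ℕ → ℝ) (c I M : ℝ) (hc : 0 ≤ c) (hI : 0 ≤ I) (hM : 0 ≤ M)
    (h0 : b 0 ≤ c * I) (hb : ∀ p < N, b (p + 1) ^ 2 ≤ c * b p * M) :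
    ∀ p ≤ N, b p ≤ c * (I ^ ((1 : ℝ) / 2 ^ p) * M ^ (1 - (1 : ℝ) / 2 ^ p)) := by
  intro p
  induction p with
  | zero => intro _; simpa using h0
  | succ p ih =>
    intro hp
    have h1 := ih (by omega)
    have h2 := hb p (by omega)
    have h3 := hq_sq I M hI hM p
    have hQ : 0 ≤ I ^ ((1 : ℝ) / 2 ^ (p + 1)) * M ^ (1 - (1 : ℝ) / 2 ^ (p + 1)) := by positivity
    apply le_of_sq_le_sq _ (mul_nonneg hc hQ)
    rw [mul_pow, h3]
    have h4 := mul_le_mul_of_nonneg_left h1 (mul_nonneg hc hM)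
    linarith

/-! ### Main estimates -/

/-- barycenter -/
noncomputable def bary (φ ψ r : W) : W := (1 / 3 : ℝ) • φ + (1 / 3 : ℝ) • ψ + (1 / 3 : ℝ) • r

lemma comb3_mem (S : MASetup m W) {φ ψ r : W} (hφ : φ ∈ S.F) (hψ : ψ ∈ S.F) (hr : r ∈ S.F)
    (a b c : ℝ) (ha : 0 ≤ a) (hb : 0 ≤ b) (hc : 0 ≤ c) (h : a + b + c = 1) :
    a • φ + b • ψ + c • r ∈ S.F := by
  rcases eq_or_lt_of_le (add_nonneg ha hb) with h0 | h0
  · have ha0 : a = 0 := by linarith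
    have hb0 : b = 0 := by linarith
    have hc0 : c = 1 := by linarith
    simpa [ha0, hb0, hc0] using hr
  · have h1 := S.Fconv hφ hψ (div_nonneg ha h0.le) (div_nonneg hb h0.le) (by field_simp)
    have h2 := S.Fconv h1 hr h0.le hc h
    convert h2 using 2
    rw [smul_add, smul_smul, smul_smul, mul_div_cancel₀ _ h0.ne', mul_div_cancel₀ _ h0.ne']

/-- constant -/
noncomputable def c2 (m : ℕ) : ℝ := 3 ^ m * (200 * (2 ^ m * ((m : ℝ) + 2)))

/-- Letters dominated by the barycenter. -/
def Let (S : MASetup m W) (χ x : W) : Prop :=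
  x ∈ S.F ∧ ∃ y ∈ S.F, χ = (1 / 3 : ℝ) • x + (1 - 1 / 3 : ℝ) • y

lemma ip_letters (S : MASetup m W) {χ u : W} (hχ : χ ∈ S.F) (hu : u ∈ S.W0)
    (g : Fin m → W) (hg : ∀ i, S.Let χ (g i)) :
    S.ip g u u ≤ 3 ^ m * S.ip (fun _ => χ) u u := by
  have h1 := S.ip_dom u hu (1 / 3) (by norm_num) (by norm_num)
    g (fun _ => χ) (fun i => (hg i).1) (fun _ => hχ) (fun i => (hg i).2)
  have h5 := mul_le_mul_of_nonneg_left h1 (show (0 : ℝ) ≤ 3 ^ m by positivity)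
  rw [← mul_assoc, ← mul_pow] at h5
  norm_num at h5
  exact h5

lemma ip_bound (S : MASetup m W) {φ ψ r : W} (hφ : φ ∈ S.F) (hψ : ψ ∈ S.F) (hr : r ∈ S.F)
    (M : ℝ) (h1 : S.Jfun r φ ≤ M) (h2 : S.Jfun r ψ ≤ M)
    (g : Fin m → W) (hg : ∀ i, S.Let (bary φ ψ r) (g i)) (s t : ℝ) (hst : s ^ 2 + t ^ 2 ≤ 2) :
    S.ip g (s • (φ - r) + t • (ψ - r)) (s • (φ - r) + t • (ψ - r)) ≤ c2 m * M := by
  have hM : 0 ≤ M := (S.J_nonneg hφ hr).trans h1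
  have hJ : ∀ a b : ℝ, 0 ≤ a → 0 ≤ b → a + b ≤ 1 → ∀ ω ∈ S.F,
      ω = a • φ + b • ψ + (1 - a - b) • r → S.Jfun r ω ≤ M := by
    intro a b ha hb hab ω hω he
    have := S.J_convex hφ hψ hr hω a b ha hb hab he
    nlinarith [mul_le_mul_of_nonneg_left h1 ha, mul_le_mul_of_nonneg_left h2 hb]
  have hχ : bary φ ψ r ∈ S.F := S.comb3_mem hφ hψ hr _ _ _ (by norm_num) (by norm_num)
    (by norm_num) (by norm_num)
  have hχ2 : (1 / 4 : ℝ) • φ + (1 / 2 : ℝ) • ψ + (1 / 4 : ℝ) • r ∈ S.F :=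
    S.comb3_mem hφ hψ hr _ _ _ (by norm_num) (by norm_num) (by norm_num) (by norm_num)
  have hχ3 : (1 / 2 : ℝ) • φ + (1 / 4 : ℝ) • ψ + (1 / 4 : ℝ) • r ∈ S.F :=
    S.comb3_mem hφ hψ hr _ _ _ (by norm_num) (by norm_num) (by norm_num) (by norm_num)
  have hy2 : (1 / 6 : ℝ) • φ + (2 / 3 : ℝ) • ψ + (1 / 6 : ℝ) • r ∈ S.F :=
    S.comb3_mem hφ hψ hr _ _ _ (by norm_num) (by norm_num) (by norm_num) (by norm_num)
  have hy3 : (2 / 3 : ℝ) • φ + (1 / 6 : ℝ) • ψ + (1 / 6 : ℝ) • r ∈ S.F :=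
    S.comb3_mem hφ hψ hr _ _ _ (by norm_num) (by norm_num) (by norm_num) (by norm_num)
  have n1 := S.ip_le_of_J hχ hχ hr M
    (hJ (1 / 3) (1 / 3) (by norm_num) (by norm_num) (by norm_num) _ hχ (by rw [bary]; module))
    ⟨_, hχ, by module⟩
  have n2 := S.ip_le_of_J hχ2 hχ hr M
    (hJ (1 / 4) (1 / 2) (by norm_num) (by norm_num) (by norm_num) _ hχ2 (by module))
    ⟨_, hy2, by rw [bary]; module⟩
  have n3 := S.ip_le_of_J hχ3 hχ hr M
    (hJ (1 / 2) (1 / 4) (by norm_num) (by norm_num) (by norm_num) _ hχ3 (by module))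
    ⟨_, hy3, by rw [bary]; module⟩
  have w1 := S.sub_mem_W0 hχ hr
  have w2 := S.sub_mem_W0 hχ2 hr
  have w3 := S.sub_mem_W0 hχ3 hr
  have wa := S.sub_mem_W0 hφ hr
  have wb := S.sub_mem_W0 hψ hr
  have ka := S.ip_comb (fun _ => bary φ ψ r) (fun _ => hχ) _ _ w3 w1 4 (-3)
  have kb := S.ip_comb (fun _ => bary φ ψ r) (fun _ => hχ) _ _ w2 w1 4 (-3)
  have ea : (4 : ℝ) • ((1 / 2 : ℝ) • φ + (1 / 4 : ℝ) • ψ + (1 / 4 : ℝ) • r - r) +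
      (-3 : ℝ) • (bary φ ψ r - r) = φ - r := by rw [bary]; module
  have eb : (4 : ℝ) • ((1 / 4 : ℝ) • φ + (1 / 2 : ℝ) • ψ + (1 / 4 : ℝ) • r - r) +
      (-3 : ℝ) • (bary φ ψ r - r) = ψ - r := by rw [bary]; module
  rw [ea] at ka
  rw [eb] at kb
  have kc := S.ip_comb (fun _ => bary φ ψ r) (fun _ => hχ) _ _ wa wb s t
  have kl := S.ip_letters hχ (S.W0.add_mem (S.W0.smul_mem s wa) (S.W0.smul_mem t wb)) g hg
  refine kl.trans ?_
  rw [c2, mul_assoc]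
  apply mul_le_mul_of_nonneg_left _ (by positivity)
  have hX : 0 ≤ 2 ^ m * (((m : ℝ) + 2) * M) := by positivity
  have ka' : S.ip (fun _ => bary φ ψ r) (φ - r) (φ - r) ≤ 50 * (2 ^ m * (((m : ℝ) + 2) * M)) := by
    linarith
  have kb' : S.ip (fun _ => bary φ ψ r) (ψ - r) (ψ - r) ≤ 50 * (2 ^ m * (((m : ℝ) + 2) * M)) := by
    linarith
  have l1 := mul_le_mul_of_nonneg_left ka' (show 0 ≤ 2 * s ^ 2 by positivity)
  have l2 := mul_le_mul_of_nonneg_left kb' (show 0 ≤ 2 * t ^ 2 by positivity)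
  have l3 := mul_le_mul_of_nonneg_right hst hX
  linarith

lemma c2_pos (m : ℕ) : 0 < c2 m := by rw [c2]; positivity

lemma core (S : MASetup m W) {φ ψ r : W} (hφ : φ ∈ S.F) (hψ : ψ ∈ S.F) (hr : r ∈ S.F)
    (M : ℝ) (h1 : S.Jfun r φ ≤ M) (h2 : S.Jfun r ψ ≤ M) :
    S.ip (fun _ => bary φ ψ r) (φ - ψ) (φ - ψ) ≤
      9 * c2 m * (S.Ifun φ ψ ^ ((1 : ℝ) / 2 ^ m) * M ^ (1 - (1 : ℝ) / 2 ^ m)) := by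
  have hM : 0 ≤ M := (S.J_nonneg hφ hr).trans h1
  have hI := S.I_nonneg hφ hψ
  have hc := c2_pos m
  have hχ : bary φ ψ r ∈ S.F := S.comb3_mem hφ hψ hr _ _ _ (by norm_num) (by norm_num)
    (by norm_num) (by norm_num)
  obtain ⟨τ, hτd⟩ : ∃ τ : W, τ = (1 / 2 : ℝ) • φ + (1 / 2 : ℝ) • ψ := ⟨_, rfl⟩
  have hτ : τ ∈ S.F := by
    rw [hτd]
    exact S.Fconv hφ hψ (by norm_num) (by norm_num) (by norm_num)
  have lφ : S.Let (bary φ ψ r) φ := ⟨hφ, _, S.Fconv hψ hr (show (0 : ℝ) ≤ 1 / 2 by norm_num)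
    (show (0 : ℝ) ≤ 1 / 2 by norm_num) (by norm_num), by rw [bary]; module⟩
  have lψ : S.Let (bary φ ψ r) ψ := ⟨hψ, _, S.Fconv hφ hr (show (0 : ℝ) ≤ 1 / 2 by norm_num)
    (show (0 : ℝ) ≤ 1 / 2 by norm_num) (by norm_num), by rw [bary]; module⟩
  have lτ : S.Let (bary φ ψ r) τ := ⟨hτ, _, S.comb3_mem hφ hψ hr (1 / 4) (1 / 4) (1 / 2)
    (by norm_num) (by norm_num) (by norm_num) (by norm_num), by rw [bary, hτd]; module⟩
  have lχ : S.Let (bary φ ψ r) (bary φ ψ r) := ⟨hχ, _, hχ, by module⟩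
  have hbd := S.ip_bound hφ hψ hr M h1 h2
  have hu := S.sub_mem_W0 hφ hψ
  obtain ⟨χ, hχd⟩ : ∃ χ : W, χ = bary φ ψ r := ⟨_, rfl⟩
  rw [← hχd] at hχ lφ lψ lτ lχ ⊢
  simp only [← hχd] at hbd
  have hw := S.sub_mem_W0 hχ hτ
  have hub : ∀ g : Fin m → W, (∀ i, S.Let χ (g i)) → S.ip g (φ - ψ) (φ - ψ) ≤ c2 m * M := by
    intro g hg
    have := hbd g hg 1 (-1) (by norm_num)
    rwa [show (1 : ℝ) • (φ - r) + (-1 : ℝ) • (ψ - r) = φ - ψ by module] at this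
  have hwb : ∀ g : Fin m → W, (∀ i, S.Let χ (g i)) → S.ip g (χ - τ) (χ - τ) ≤ c2 m * M := by
    intro g hg
    have := hbd g hg (-1 / 6) (-1 / 6) (by norm_num)
    rwa [show (-1 / 6 : ℝ) • (φ - r) + (-1 / 6 : ℝ) • (ψ - r) = χ - τ by
      rw [hχd, hτd, bary]; module] at this
  have hch := chain m (fun p => S.ip (mixVec χ τ p) (φ - ψ) (φ - ψ)) (9 * c2 m) (S.Ifun φ ψ) M
    (by positivity) hI hM ?_ ?_ m le_rfl
  · rwa [mixVec_top _ _ (le_refl m)] at hch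
  · rw [mixVec_zero]
    have hJ : S.Jfun ψ τ ≤ S.Ifun φ ψ := by
      have k1 := S.J_convex hφ hφ hψ hτ (1 / 2) 0 (by norm_num) (by norm_num) (by norm_num)
        (by rw [hτd]; module)
      have k2 := S.J_le_I hφ hψ
      linarith
    have k := S.ip_le_of_J hτ hτ hψ _ hJ ⟨τ, hτ, by module⟩
    rw [show φ - ψ = (2 : ℝ) • (τ - ψ) by rw [hτd]; module, ip_smul_left, ip_smul_right]
    have h3 : (1 : ℝ) ≤ 3 ^ m := one_le_pow₀ (by norm_num)
    have hX : 0 ≤ 2 ^ m * (((m : ℝ) + 2) * S.Ifun φ ψ) := by positivity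
    have := mul_le_mul_of_nonneg_right h3 hX
    rw [c2]
    linarith
  · intro p hp
    have hgL : ∀ i, S.Let χ ((mixVec χ τ p : Fin m → W) i) := by
      intro i; simp only [mixVec]; split_ifs <;> assumption
    have hup : ∀ x, S.Let χ x →
        ∀ i, S.Let χ (Function.update (mixVec χ τ p : Fin m → W) ⟨p, hp⟩ x i) := by
      intro x hx i
      by_cases hi : i = ⟨p, hp⟩
      · subst hi; simpa using hx
      · simpa [hi] using hgL i
    have s1 := mixVec_succ χ τ (⟨p, hp⟩ : Fin m)
    have s2 := mixVec_self χ τ (⟨p, hp⟩ : Fin m)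
    simp only at s1 s2
    have e1 := (S.ipM (φ - ψ) (φ - ψ)).map_update_sub (mixVec χ τ p) ⟨p, hp⟩ χ τ
    have e2 := (S.ipM (φ - ψ) (χ - τ)).map_update_sub (mixVec χ τ p) ⟨p, hp⟩ φ ψ
    have e3 : S.ip (Function.update (mixVec χ τ p) ⟨p, hp⟩ (χ - τ)) (φ - ψ) (φ - ψ) =
        S.ip (Function.update (mixVec χ τ p) ⟨p, hp⟩ (φ - ψ)) (φ - ψ) (χ - τ) := by
      simp only [ip]; rw [S.B_swap_tail]
    have e4 := (S.ipM (φ - ψ) (φ - ψ)).map_update_add (mixVec χ τ p) ⟨p, hp⟩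
      ((1 / 2 : ℝ) • φ) ((1 / 2 : ℝ) • ψ)
    rw [MultilinearMap.map_update_smul, MultilinearMap.map_update_smul, ← hτd, s2] at e4
    rw [s1, s2] at e1
    simp only [ipM_apply, smul_eq_mul] at e1 e2 e4
    have hFφ := fun i => (hup φ lφ i).1
    have hFψ := fun i => (hup ψ lψ i).1
    have cs1 := S.ip_cs _ hFφ _ _ hu hw
    have cs2 := S.ip_cs _ hFψ _ _ hu hw
    have p1 := S.ip_nonneg _ hFφ _ hu
    have p2 := S.ip_nonneg _ hFψ _ hu
    have p3 := S.ip_nonneg _ (fun i => (hgL i).1) _ hu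
    have q1 := mul_le_mul_of_nonneg_left (hwb _ (hup φ lφ)) p1
    have q2 := mul_le_mul_of_nonneg_left (hwb _ (hup ψ lψ)) p2
    have q3 := mul_le_mul_of_nonneg_left (hub _ hgL) p3
    rw [e3, e2] at e1
    generalize S.ip (Function.update (mixVec χ τ p) ⟨p, hp⟩ φ) (φ - ψ) (χ - τ) = X at *
    generalize S.ip (Function.update (mixVec χ τ p) ⟨p, hp⟩ ψ) (φ - ψ) (χ - τ) = Y at *
    generalize S.ip (mixVec χ τ p) (φ - ψ) (φ - ψ) = b at *
    generalize S.ip (mixVec χ τ (p + 1)) (φ - ψ) (φ - ψ) = b' at *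
    have hb' : b' = b + X - Y := by linarith
    have hsq : b' ^ 2 ≤ 3 * (b ^ 2 + X ^ 2 + Y ^ 2) := by
      rw [hb']; nlinarith [sq_nonneg (b - X), sq_nonneg (b + Y), sq_nonneg (X + Y)]
    have hXY : X ^ 2 + Y ^ 2 ≤ 2 * b * (c2 m * M) := by
      rw [e4]; linarith
    linarith

/-- The final constant. -/
noncomputable def c3 (m : ℕ) : ℝ := 3 ^ m * (9 * c2 m)

lemma ip_final (S : MASetup m W) {φ ψ r : W} (hφ : φ ∈ S.F) (hψ : ψ ∈ S.F) (hr : r ∈ S.F)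
    (M : ℝ) (h1 : S.Jfun r φ ≤ M) (h2 : S.Jfun r ψ ≤ M)
    (g : Fin m → W) (hg : ∀ i, g i ∈ ({φ, ψ, r} : Set W)) (s t : ℝ) (hst : s ^ 2 + t ^ 2 ≤ 2) :
    |S.ip g (φ - ψ) (s • (φ - r) + t • (ψ - r))| ≤ c3 m *
      (S.Ifun φ ψ ^ ((1 : ℝ) / 2 ^ (m + 1)) * M ^ (1 - (1 : ℝ) / 2 ^ (m + 1))) := by
  have hM : 0 ≤ M := (S.J_nonneg hφ hr).trans h1
  have hI := S.I_nonneg hφ hψ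
  have hc := c2_pos m
  have hχ : bary φ ψ r ∈ S.F := S.comb3_mem hφ hψ hr _ _ _ (by norm_num) (by norm_num)
    (by norm_num) (by norm_num)
  have hgL : ∀ i, S.Let (bary φ ψ r) (g i) := by
    intro i
    rcases hg i with h | h | h
    · rw [h]
      exact ⟨hφ, _, S.Fconv hψ hr (show (0 : ℝ) ≤ 1 / 2 by norm_num)
        (show (0 : ℝ) ≤ 1 / 2 by norm_num) (by norm_num), by rw [bary]; module⟩
    · rw [h]
      exact ⟨hψ, _, S.Fconv hφ hr (show (0 : ℝ) ≤ 1 / 2 by norm_num)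
        (show (0 : ℝ) ≤ 1 / 2 by norm_num) (by norm_num), by rw [bary]; module⟩
    · rw [h]
      exact ⟨hr, _, S.Fconv hφ hψ (show (0 : ℝ) ≤ 1 / 2 by norm_num)
        (show (0 : ℝ) ≤ 1 / 2 by norm_num) (by norm_num), by rw [bary]; module⟩
  have hu := S.sub_mem_W0 hφ hψ
  have hv : s • (φ - r) + t • (ψ - r) ∈ S.W0 := S.W0.add_mem
    (S.W0.smul_mem s (S.sub_mem_W0 hφ hr)) (S.W0.smul_mem t (S.sub_mem_W0 hψ hr))
  have hcs := S.ip_cs g (fun i => (hgL i).1) _ _ hu hv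
  have hb := S.ip_bound hφ hψ hr M h1 h2 g hgL s t hst
  have hp := S.ip_nonneg g (fun i => (hgL i).1) _ hv
  have hl := S.ip_letters hχ hu g hgL
  have hco := mul_le_mul_of_nonneg_left (S.core hφ hψ hr M h1 h2)
    (show (0 : ℝ) ≤ 3 ^ m by positivity)
  have hsq := hq_sq (S.Ifun φ ψ) M hI hM m
  have hQ : 0 ≤ S.Ifun φ ψ ^ ((1 : ℝ) / 2 ^ (m + 1)) * M ^ (1 - (1 : ℝ) / 2 ^ (m + 1)) := by
    positivity
  have hQ' : 0 ≤ S.Ifun φ ψ ^ ((1 : ℝ) / 2 ^ m) * M ^ (1 - (1 : ℝ) / 2 ^ m) := by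
    positivity
  have hc3 : c2 m ≤ c3 m := by
    have h3 : (1 : ℝ) ≤ 3 ^ m := one_le_pow₀ (by norm_num)
    rw [c3]; nlinarith
  have hc30 : 0 ≤ c3 m := hc.le.trans hc3
  apply abs_le_of_sq_le_sq _ (mul_nonneg hc30 hQ)
  rw [mul_pow, hsq]
  have hA : S.ip g (φ - ψ) (φ - ψ) ≤
      c3 m * (S.Ifun φ ψ ^ ((1 : ℝ) / 2 ^ m) * M ^ (1 - (1 : ℝ) / 2 ^ m)) := by
    rw [c3]; linarith
  have hB := hb.trans (mul_le_mul_of_nonneg_right hc3 hM)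
  have := mul_le_mul hA hB hp (mul_nonneg hc30 hQ')
  linarith

lemma remove_mem {k : ℕ} (L : Set W) (p : Fin (k + 1) → W) (hp : ∀ j, p j ∈ L) (i : Fin (k + 1))
    (j : Fin k) : i.removeNth p j ∈ L := hp _

lemma diff_comb {φ ψ r x y : W} (hx : x ∈ ({φ, ψ, r} : Set W)) (hy : y ∈ ({φ, ψ, r} : Set W)) :
    ∃ s t : ℝ, s ^ 2 + t ^ 2 ≤ 2 ∧ x - y = s • (φ - r) + t • (ψ - r) := by
  rcases hx with rfl | rfl | rfl <;> rcases hy with rfl | rfl | rfl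
  · exact ⟨0, 0, by norm_num, by module⟩
  · exact ⟨1, -1, by norm_num, by module⟩
  · exact ⟨1, 0, by norm_num, by module⟩
  · exact ⟨-1, 1, by norm_num, by module⟩
  · exact ⟨0, 0, by norm_num, by module⟩
  · exact ⟨0, 1, by norm_num, by module⟩
  · exact ⟨-1, 0, by norm_num, by module⟩
  · exact ⟨0, -1, by norm_num, by module⟩
  · exact ⟨0, 0, by norm_num, by module⟩

lemma B_diff_bound (S : MASetup m W) {φ ψ r : W} (hφ : φ ∈ S.F) (hψ : ψ ∈ S.F) (hr : r ∈ S.F)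
    (M : ℝ) (h1 : S.Jfun r φ ≤ M) (h2 : S.Jfun r ψ ≤ M) (g h : Fin (m + 1) → W)
    (hg : ∀ i, g i ∈ ({φ, ψ, r} : Set W)) (hh : ∀ i, h i ∈ ({φ, ψ, r} : Set W)) :
    |S.B (Fin.cons (φ - ψ) h) - S.B (Fin.cons (φ - ψ) g)| ≤ ((m : ℝ) + 1) * (c3 m *
      (S.Ifun φ ψ ^ ((1 : ℝ) / 2 ^ (m + 1)) * M ^ (1 - (1 : ℝ) / 2 ^ (m + 1)))) := by
  have := ml_tele (S.B.curryLeft (φ - ψ)) {φ, ψ, r} (c3 m *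
      (S.Ifun φ ψ ^ ((1 : ℝ) / 2 ^ (m + 1)) * M ^ (1 - (1 : ℝ) / 2 ^ (m + 1)))) ?_ g h hg hh
  · simpa [-map_sub] using this
  · intro p i hp x hx y hy
    obtain ⟨s, t, hst, e⟩ := diff_comb hx hy
    have k := S.ip_final hφ hψ hr M h1 h2 (i.removeNth p) (remove_mem _ p hp i) s t hst
    rw [MultilinearMap.curryLeft_apply, B_cons_update, e]
    rwa [ip, abs_neg] at k

lemma B_diff_bound' (S : MASetup m W) {φ ψ r : W} (hφ : φ ∈ S.F) (hψ : ψ ∈ S.F) (hr : r ∈ S.F)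
    (M : ℝ) (h1 : S.Jfun r φ ≤ M) (h2 : S.Jfun r ψ ≤ M) :
    |S.B (Fin.cons (ψ - r) fun _ => ψ) - S.B (Fin.cons (ψ - r) fun _ => φ)| ≤
      ((m : ℝ) + 1) * (c3 m *
      (S.Ifun φ ψ ^ ((1 : ℝ) / 2 ^ (m + 1)) * M ^ (1 - (1 : ℝ) / 2 ^ (m + 1)))) := by
  have := ml_tele (S.B.curryLeft (ψ - r)) {φ, ψ} (c3 m *
      (S.Ifun φ ψ ^ ((1 : ℝ) / 2 ^ (m + 1)) * M ^ (1 - (1 : ℝ) / 2 ^ (m + 1)))) ?_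
      (fun _ => φ) (fun _ => ψ) (by simp) (by simp)
  · simpa [-map_sub] using this
  · intro p i hp x hx y hy
    have hs : ∃ s : ℝ, |s| ≤ 1 ∧ x - y = s • (φ - ψ) := by
      rcases hx with rfl | rfl <;> rcases hy with rfl | rfl
      · exact ⟨0, by norm_num, by module⟩
      · exact ⟨1, by norm_num, by module⟩
      · exact ⟨-1, by norm_num, by module⟩
      · exact ⟨0, by norm_num, by module⟩
    obtain ⟨s, hs, e⟩ := hs
    have hp' : ∀ j, p j ∈ ({φ, ψ, r} : Set W) := by
      intro j
      rcases hp j with h | h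
      · exact Or.inl h
      · exact Or.inr (Or.inl h)
    have k := S.ip_final hφ hψ hr M h1 h2 (i.removeNth p) (remove_mem _ p hp' i) 0 1 (by norm_num)
    rw [zero_smul, one_smul, zero_add, ip_symm] at k
    rw [MultilinearMap.curryLeft_apply, B_cons_update, e, ← abs_neg]
    change |S.ip (i.removeNth p) (ψ - r) (s • (φ - ψ))| ≤ _
    rw [ip_smul_right, abs_mul]
    calc _ ≤ 1 * |S.ip (i.removeNth p) (ψ - r) (φ - ψ)| :=
          mul_le_mul_of_nonneg_right hs (abs_nonneg _)
      _ ≤ _ := by rw [one_mul]; exact k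

lemma B_cons_sub (S : MASetup m W) (x y : W) (g : Fin (m + 1) → W) :
    S.B (Fin.cons (x - y) g) = S.B (Fin.cons x g) - S.B (Fin.cons y g) := by
  have := congrArg (fun f => f g) (map_sub S.B.curryLeft x y)
  simpa [-map_sub] using this

end MASetup


/-- there is `C > 0` depending only on `n = m + 1` such that for
every setup, reference `φ_ref ∈ F`, and all `φ, ψ ∈ F`:
`max{|I(φ) - I(ψ)|, |J(φ) - J(ψ)|} ≤ C I(φ,ψ)^{1/2ⁿ} (max{J(φ), J(ψ)})^{1-1/2ⁿ}`,
where `I(φ) = I(φ, φ_ref)` and `J(φ) = J_{φ_ref}(φ)`. -/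
theorem IJ_holder_continuity (m : ℕ) :
    ∃ C : ℝ, 0 < C ∧
      ∀ (W : Type*) [AddCommGroup W] [Module ℝ W] (S : MASetup m W),
        ∀ φref ∈ S.F, ∀ φ ∈ S.F, ∀ ψ ∈ S.F,
          max |S.Ifun φ φref - S.Ifun ψ φref| |S.Jfun φref φ - S.Jfun φref ψ| ≤
            C * S.Ifun φ ψ ^ ((1 : ℝ) / 2 ^ (m + 1)) *
              (max (S.Jfun φref φ) (S.Jfun φref ψ)) ^ (1 - (1 : ℝ) / 2 ^ (m + 1)) := by
  refine ⟨2 * ((m : ℝ) + 1) * MASetup.c3 m, ?_, ?_⟩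
  · have := MASetup.c2_pos m
    rw [MASetup.c3]
    positivity
  intro W _ _ S r hr φ hφ ψ hψ
  have h1 := le_max_left (S.Jfun r φ) (S.Jfun r ψ)
  have h2 := le_max_right (S.Jfun r φ) (S.Jfun r ψ)
  generalize max (S.Jfun r φ) (S.Jfun r ψ) = M at *
  have hd := S.B_diff_bound hφ hψ hr M h1 h2
  have hd' := S.B_diff_bound' hφ hψ hr M h1 h2
  generalize S.Ifun φ ψ ^ ((1 : ℝ) / 2 ^ (m + 1)) = P at *
  generalize M ^ (1 - (1 : ℝ) / 2 ^ (m + 1)) = Q at *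
  have hmix : ∀ j, ∀ i : Fin (m + 1), MASetup.mixVec φ ψ j i ∈ ({φ, ψ, r} : Set W) := by
    intro j i
    simp only [MASetup.mixVec]; split_ifs <;> simp
  have hcφ : ∀ i : Fin (m + 1), (fun _ => φ : Fin (m + 1) → W) i ∈ ({φ, ψ, r} : Set W) := by simp
  have hcr : ∀ i : Fin (m + 1), (fun _ => r : Fin (m + 1) → W) i ∈ ({φ, ψ, r} : Set W) := by simp
  have hpos : 0 ≤ ((m : ℝ) + 1) * (MASetup.c3 m * (P * Q)) := (abs_nonneg _).trans hd'
  apply max_le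
  · have e : S.Ifun φ r - S.Ifun ψ r =
        (S.B (Fin.cons (φ - ψ) fun _ => r) - S.B (Fin.cons (φ - ψ) fun _ => φ)) +
        (S.B (Fin.cons (ψ - r) fun _ => ψ) - S.B (Fin.cons (ψ - r) fun _ => φ)) := by
      simp only [MASetup.Ifun, MASetup.B_cons_sub]; ring
    rw [e]
    refine (abs_add_le _ _).trans ?_
    have := hd _ _ hcφ hcr
    linarith
  · have hm : (0 : ℝ) < (m : ℝ) + 2 := by positivity
    have e : ((m : ℝ) + 2) * (S.Jfun r φ - S.Jfun r ψ) = ∑ j ∈ Finset.range (m + 2),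
        (S.B (Fin.cons (φ - ψ) fun _ => r) -
          S.B (Fin.cons (φ - ψ) (MASetup.mixVec φ ψ j))) := by
      have e1 : S.Jfun r φ - S.Jfun r ψ = S.B (Fin.cons (φ - ψ) fun _ => r) - S.energy φ ψ := by
        simp only [MASetup.Jfun, MASetup.energy_eq, MASetup.B_cons_sub]; ring
      rw [e1, MASetup.energy, Finset.sum_sub_distrib, Finset.sum_const, Finset.card_range]
      field_simp
      simp
    have hle : |((m : ℝ) + 2) * (S.Jfun r φ - S.Jfun r ψ)| ≤
        ((m : ℝ) + 2) * (((m : ℝ) + 1) * (MASetup.c3 m * (P * Q))) := by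
      rw [e]
      refine (Finset.abs_sum_le_sum_abs _ _).trans ?_
      refine (Finset.sum_le_card_nsmul _ _ _ (fun j _ => hd _ _ (hmix j) hcr)).trans ?_
      simp
    rw [abs_mul, abs_of_pos hm] at hle
    have := le_of_mul_le_mul_left hle hm
    linarith
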